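/- arXiv:1312.1672 — 9 statements merged into one kernel-verified Lean document; each statement's English description precedes it below -/
import Mathlib

section
/- Let V be a finite set of propositional variables partitioned into two disjoint sets X and Y, let k ∈ ℕ, and let C be a Boolean circuit over input variables V using only binary conjunction gates and negation gates; model C as a finite sequence of nodes g₁,…,g_N where each node g_r is labeled either with an input variable w ∈ V, or with ¬g_a for some a < r, or with g_a ∧ g_b for some a,b < r, the value of each node under a truth assignment V → Bool being defined by recursion in the obvious way, and the output of C being the value of g_N. Introduce a fresh variable z_r for every node g_r, and let ψ′ be the 3DNF formula over the variables V ∪ {z₁,…,z_N} given by ψ′ = (⋁_{r=1}^{N} χ_r) ∨ z_N, where: χ_r = (z_r ∧ ¬z_a) ∨ (z_r ∧ ¬z_b) ∨ (z_a ∧ z_b ∧ ¬z_r) if g_r is labeled g_a ∧ g_b; χ_r = (z_r ∧ z_a) ∨ (¬z_r ∧ ¬z_a) if g_r is labeled ¬g_a; and χ_r = (z_r ∧ ¬w) ∨ (¬z_r ∧ w) if g_r is labeled with the input variable w. Then the following are equivalent: (1) there exists a truth assignment α : X → Bool of weight k such that for every truth assignment β : Y → Bool the output of C under α ∪ β is true;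 (2) there exists a truth assignment α : X → Bool of weight k such that for every truth assignment γ : Y ∪ {z₁,…,z_N} → Bool the formula ψ′ evaluates to true under α ∪ γ. -/
/-- A node of a Boolean circuit over input variables `V`: either labeled with an input
variable, with the negation of an earlier node, or with the binary conjunction of two
earlier nodes (nodes are referenced by their index). -/
inductive CNode (V : Type) : Type
  | input (w : V)
  | neg (a : ℕ)
  | conj (a b : ℕ)

/-- The value of node `r` of the circuit `g` under the truth assignment `σ`, defined by
recursion in the obvious way (references to nodes that are not strictly earlier are
irrelevant for well-formed circuits; they default to `false`). -/
def nodeVal {V : Type} (g : ℕ → CNode V) (σ : V → Bool) : ℕ → Bool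
  | r =>
    match g r with
    | CNode.input w => σ w
    | CNode.neg a => if h : a < r then !(nodeVal g σ a) else false
    | CNode.conj a b =>
        if h : a < r ∧ b < r then nodeVal g σ a && nodeVal g σ b else false
termination_by r => r

/-- The Tseitin disjunct `χ_r` of the 3DNF formula `ψ'` for node `r`, evaluated under the
assignment `σ` to the circuit inputs and the assignment `ζ` to the fresh variables `z_r`. -/
def chiHolds {V : Type} (g : ℕ → CNode V) (σ : V → Bool) (ζ : ℕ → Bool) (r : ℕ) : Prop :=
  match g r with
  | CNode.input w => (ζ r = true ∧ σ w = false) ∨ (ζ r = false ∧ σ w = true)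
  | CNode.neg a => (ζ r = true ∧ ζ a = true) ∨ (ζ r = false ∧ ζ a = false)
  | CNode.conj a b =>
      (ζ r = true ∧ ζ a = false) ∨ (ζ r = true ∧ ζ b = false) ∨
        (ζ a = true ∧ ζ b = true ∧ ζ r = false)

/-- The 3DNF formula `ψ' = (⋁_{r<N} χ_r) ∨ z_N` (for the circuit with nodes indexed by
`0,…,N-1` and output node `N-1`) evaluates to true under `σ` and `ζ`. -/
def psiSat {V : Type} (g : ℕ → CNode V) (σ : V → Bool) (ζ : ℕ → Bool) (N : ℕ) : Prop :=
  (∃ r < N, chiHolds g σ ζ r) ∨ ζ (N - 1) = true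

/-- The weight of a truth assignment: the number of variables it maps to true. -/
def weight {X : Type} [Fintype X] (α : X → Bool) : ℕ :=
  (Finset.univ.filter fun x => α x = true).card

/-- No disjunct `χ_r` holds at node `r` iff `ζ r` is the locally correct gate value, given that
`ζ` agrees with the node values below `r`. -/
theorem not_chiHolds_iff {V : Type} (g : ℕ → CNode V) (σ : V → Bool) (ζ : ℕ → Bool) (r : ℕ)
    (hn : ∀ a, g r = CNode.neg a → a < r)
    (hc : ∀ a b, g r = CNode.conj a b → a < r ∧ b < r)
    (ih : ∀ s, s < r → ζ s = nodeVal g σ s) :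
    ¬ chiHolds g σ ζ r ↔ ζ r = nodeVal g σ r := by
  rw [nodeVal, chiHolds]
  cases hg : g r with
  | input w =>
    simp only
    cases ζ r <;> cases σ w <;> simp
  | neg a =>
    have ha := hn a hg
    simp only [ha, dif_pos, ← ih a ha]
    cases ζ r <;> cases ζ a <;> simp
  | conj a b =>
    have hab := hc a b hg
    simp only [hab, and_self, dif_pos, ← ih a hab.1, ← ih b hab.2]
    cases ζ r <;> cases ζ a <;> cases ζ b <;> simp

/-- Correctness of the Tseitin-style transformation collapsing the ∃ᵏ∀* hierarchy:
for a well-formed circuit `g` with `N` nodes over the variables `X ⊕ Y`, there is a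
weight-`k` assignment `α` to `X` such that all assignments `β` to `Y` make the circuit
output true iff there is a weight-`k` assignment `α` to `X` such that all assignments
`γ` to `Y` together with the fresh variables `z_0,…,z_{N-1}` satisfy the 3DNF
formula `ψ'`. -/
theorem statement0 {X Y : Type} [Fintype X] (k N : ℕ) (hN : 0 < N)
    (g : ℕ → CNode (X ⊕ Y))
    (hwf : ∀ r, r < N →
      (∀ a, g r = CNode.neg a → a < r) ∧ (∀ a b, g r = CNode.conj a b → a < r ∧ b < r)) :
    (∃ α : X → Bool, weight α = k ∧
        ∀ β : Y → Bool, nodeVal g (Sum.elim α β) (N - 1) = true) ↔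
    (∃ α : X → Bool, weight α = k ∧
        ∀ γ : (Y ⊕ Fin N) → Bool,
          psiSat g (Sum.elim α (fun y => γ (Sum.inl y)))
            (fun r => if h : r < N then γ (Sum.inr ⟨r, h⟩) else false) N) := by
  constructor
  · rintro ⟨α, hw, h⟩
    refine ⟨α, hw, fun γ => ?_⟩
    by_cases hex : ∃ r < N, chiHolds g (Sum.elim α (fun y => γ (Sum.inl y)))
        (fun r => if h : r < N then γ (Sum.inr ⟨r, h⟩) else false) r
    · exact Or.inl hex
    · right
      have key : ∀ r, r < N → (fun r => if h : r < N then γ (Sum.inr ⟨r, h⟩) else false) r =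
          nodeVal g (Sum.elim α (fun y => γ (Sum.inl y))) r := by
        intro r
        induction r using Nat.strong_induction_on with
        | _ r ih =>
          intro hr
          exact (not_chiHolds_iff g _ _ r (hwf r hr).1 (hwf r hr).2
            (fun s hs => ih s hs (hs.trans hr))).1 (fun hchi => hex ⟨r, hr, hchi⟩)
      exact (key (N - 1) (by omega)).trans (h _)
  · rintro ⟨α, hw, h⟩
    refine ⟨α, hw, fun β => ?_⟩
    have key : ∀ r, r < N → (fun r => if h : r < N then
        (Sum.elim β (fun i : Fin N => nodeVal g (Sum.elim α β) i.1) : Y ⊕ Fin N → Bool)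
          (Sum.inr ⟨r, h⟩) else false) r = nodeVal g (Sum.elim α β) r := by
      intro r hr
      simp [hr]
    rcases h (Sum.elim β (fun i => nodeVal g (Sum.elim α β) i.1)) with ⟨r, hr, hchi⟩ | hz
    · exact absurd hchi ((not_chiHolds_iff g (Sum.elim α β) _ r (hwf r hr).1 (hwf r hr).2
        (fun s hs => key s (hs.trans hr))).2 (key r hr))
    · exact (key (N - 1) (by omega)).symm.trans hz
end

section
/- Let k ≥ 1 and let φ = ∃X.∀Y.ψ be a quantified Boolean formula where X = {x₁,…,xₙ} and Y = {y₁,…,y_m} are disjoint sets of variables and ψ = δ₁ ∨ … ∨ δ_u is a 3DNF formula whose ℓ-th term is δ_ℓ = l^ℓ₁ ∧ l^ℓ₂ ∧ l^ℓ₃. Let τ be the relational vocabulary with unary relation symbols D, X̂, Ŷ and binary relation symbols C₁, C₂, C₃, O, and let 𝔄 be the finite τ-structure with domain A = X ∪ Y ∪ {δ₁,…,δ_u} ∪ {⋆} (all these elements pairwise distinct), where D^𝔄 = {δ₁,…,δ_u}, X̂^𝔄 = X, Ŷ^𝔄 = Y ∪ {⋆}, O^𝔄 = {(δ_ℓ,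 δ_{ℓ′}) : 1 ≤ ℓ < ℓ′ ≤ u}, and for each d ∈ {1,2,3}, C_d^𝔄 = {(δ_ℓ, z) : 1 ≤ ℓ ≤ u and z ∈ X ∪ Y is the variable occurring in the literal l^ℓ_d}. Let φ′ be the first-order τ-sentence ∃u₁…u_k ∀v₁…v_m ∀w₁…w_u [χ_U ∧ ((χ_V ∧ χ_W) → χ_sat)], where χ_U = ⋀_{1≤i≤k} X̂(u_i) ∧ ⋀_{1≤i<i′≤k} (u_i ≠ u_{i′}); χ_V = ⋀_{1≤i≤m} Ŷ(v_i); χ_W = ⋀_{1≤ℓ≤u} D(w_ℓ) ∧ ⋀_{1≤ℓ<ℓ′≤u} O(w_ℓ, w_{ℓ′}); and χ_sat = ⋁_{1≤ℓ≤u} ⋀_{d=1}^{3} χ^{ℓ,d}, with χ^{ℓ,d} = ⋁_{1≤j≤k} C_d(w_ℓ, u_j) if l^ℓ_d is a positive literal on a variable of X, χ^{ℓ,d} = ⋀_{1≤j≤k} ¬C_d(w_ℓ, u_j) if l^ℓ_d is a negative literal on a variable of X, χ^{ℓ,d} = ⋁_{1≤j≤m} C_d(w_ℓ, v_j) if l^ℓ_d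 is a positive literal on a variable of Y, and χ^{ℓ,d} = ⋀_{1≤j≤m} ¬C_d(w_ℓ, v_j) if l^ℓ_d is a negative literal on a variable of Y. Then the following are equivalent: (1) there exists a truth assignment α : X → Bool of weight k such that for every truth assignment β : Y → Bool the assignment α ∪ β satisfies ψ; (2) 𝔄 ⊨ φ′. -/
/-- The domain of the structure 𝔄: the variables `x₁,…,xₙ`, the variables `y₁,…,y_m`,
the terms `δ₁,…,δ_u`, and the extra element `⋆` (pairwise distinct). -/
abbrev Dom3 (n m u : ℕ) : Type := Fin n ⊕ (Fin m ⊕ (Fin u ⊕ Unit))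

/-- The domain element corresponding to the variable `x_i`. -/
def emX {n m u : ℕ} (i : Fin n) : Dom3 n m u := Sum.inl i

/-- The domain element corresponding to the variable `y_j`. -/
def emY {n m u : ℕ} (j : Fin m) : Dom3 n m u := Sum.inr (Sum.inl j)

/-- The domain element corresponding to the term `δ_ℓ`. -/
def emD {n m u : ℕ} (l : Fin u) : Dom3 n m u := Sum.inr (Sum.inr (Sum.inl l))

/-- The domain element `⋆`. -/
def emStar {n m u : ℕ} : Dom3 n m u := Sum.inr (Sum.inr (Sum.inr ()))

/-- The domain element corresponding to a variable of `X ∪ Y`. -/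
def emVar {n m u : ℕ} (z : Fin n ⊕ Fin m) : Dom3 n m u := Sum.elim emX emY z

/-- The interpretation `D^𝔄 = {δ₁,…,δ_u}`. -/
def relD {n m u : ℕ} (a : Dom3 n m u) : Prop := ∃ l : Fin u, a = emD l

/-- The interpretation `X̂^𝔄 = X`. -/
def relX {n m u : ℕ} (a : Dom3 n m u) : Prop := ∃ i : Fin n, a = emX i

/-- The interpretation `Ŷ^𝔄 = Y ∪ {⋆}`. -/
def relY {n m u : ℕ} (a : Dom3 n m u) : Prop := (∃ j : Fin m, a = emY j) ∨ a = emStar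

/-- The interpretation `O^𝔄 = {(δ_ℓ, δ_ℓ′) : ℓ < ℓ′}`. -/
def relO {n m u : ℕ} (a b : Dom3 n m u) : Prop :=
  ∃ l l' : Fin u, l < l' ∧ a = emD l ∧ b = emD l'

/-- The interpretation `C_d^𝔄 = {(δ_ℓ, z) : z is the variable occurring in the literal
l^ℓ_d}`, for the 3DNF formula with terms `δ_ℓ` given by the literal table `δ`. -/
def relC {n m u : ℕ} (δ : Fin u → Fin 3 → (Fin n ⊕ Fin m) × Bool) (d : Fin 3)
    (a z : Dom3 n m u) : Prop :=
  ∃ l : Fin u, a = emD l ∧ z = emVar (δ l d).1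

/-- The subformula `χ^{ℓ,d}` of `χ_sat`, whose shape depends on the sign and the kind of
variable of the literal `l^ℓ_d`. -/
def chiSat {n m u k : ℕ} (δ : Fin u → Fin 3 → (Fin n ⊕ Fin m) × Bool)
    (uu : Fin k → Dom3 n m u) (vv : Fin m → Dom3 n m u) (ww : Fin u → Dom3 n m u)
    (l : Fin u) (d : Fin 3) : Prop :=
  match δ l d with
  | (Sum.inl _, true) => ∃ j : Fin k, relC δ d (ww l) (uu j)
  | (Sum.inl _, false) => ∀ j : Fin k, ¬ relC δ d (ww l) (uu j)
  | (Sum.inr _, true) => ∃ j : Fin m, relC δ d (ww l) (vv j)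
  | (Sum.inr _, false) => ∀ j : Fin m, ¬ relC δ d (ww l) (vv j)

theorem strictMono_fin_eq {u : ℕ} (f : Fin u → Fin u) (hf : StrictMono f) (l : Fin u) :
    f l = l := by
  have h : f = id := (hf.range_inj strictMono_id).mp (by
    rw [Set.range_id, (Finite.injective_iff_surjective.mp hf.injective).range_eq])
  rw [h]; rfl

theorem relC_emD {n m u : ℕ} (δ : Fin u → Fin 3 → (Fin n ⊕ Fin m) × Bool) (d : Fin 3)
    (l : Fin u) (z : Dom3 n m u) : relC δ d (emD l) z ↔ z = emVar (δ l d).1 := by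
  constructor
  · rintro ⟨l', h, hz⟩
    have : l = l' := by simpa [emD] using h
    rw [hz, this]
  · intro h
    exact ⟨l, rfl, h⟩

theorem chiSat_iff {n m u k : ℕ} (δ : Fin u → Fin 3 → (Fin n ⊕ Fin m) × Bool)
    (uu : Fin k → Dom3 n m u) (vv : Fin m → Dom3 n m u) (ww : Fin u → Dom3 n m u)
    (α : Fin n → Bool) (β : Fin m → Bool)
    (hw : ∀ l, ww l = emD l)
    (hα : ∀ x, α x = true ↔ ∃ j, uu j = emX x)
    (hβ : ∀ y, β y = true ↔ ∃ j, vv j = emY y) (l : Fin u) (d : Fin 3) :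
    chiSat δ uu vv ww l d ↔ Sum.elim α β (δ l d).1 = (δ l d).2 := by
  unfold chiSat
  simp only [hw, relC_emD]
  rcases h : δ l d with ⟨x | y, _ | _⟩
  · simp only [emVar, Sum.elim_inl]
    rw [← Bool.not_eq_true, hα, not_exists]
  · simp only [emVar, Sum.elim_inl]
    rw [hα]
  · simp only [emVar, Sum.elim_inr]
    rw [← Bool.not_eq_true, hβ, not_exists]
  · simp only [emVar, Sum.elim_inr]
    rw [hβ]

/-- Correctness of the reduction from ∃ᵏ∀*-WSat(3DNF) to first-order model checking:
the 3DNF instance `∃X.∀Y.ψ` (with `ψ` given by the literal table `δ`) has a weight-`k`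
existential assignment making `∀Y.ψ` true iff the structure `𝔄` satisfies the sentence
`φ′ = ∃u₁…u_k ∀v₁…v_m ∀w₁…w_u [χ_U ∧ ((χ_V ∧ χ_W) → χ_sat)]`. -/
theorem statement3 (n m u k : ℕ) (δ : Fin u → Fin 3 → (Fin n ⊕ Fin m) × Bool) :
    ((∃ α : Fin n → Bool, weight α = k ∧
        ∀ β : Fin m → Bool, ∃ l : Fin u, ∀ d : Fin 3,
          Sum.elim α β (δ l d).1 = (δ l d).2) ↔
      (∃ uu : Fin k → Dom3 n m u,
        ∀ (vv : Fin m → Dom3 n m u) (ww : Fin u → Dom3 n m u),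
          ((∀ i : Fin k, relX (uu i)) ∧ (∀ i i' : Fin k, i < i' → uu i ≠ uu i')) ∧
          (((∀ j : Fin m, relY (vv j)) ∧
              ((∀ l : Fin u, relD (ww l)) ∧
                (∀ l l' : Fin u, l < l' → relO (ww l) (ww l')))) →
            ∃ l : Fin u, ∀ d : Fin 3, chiSat δ uu vv ww l d))) := by
  constructor
  · rintro ⟨α, hk, h⟩
    let e := (Finset.univ.filter fun x => α x = true).orderEmbOfFin hk
    have he : ∀ x, α x = true ↔ ∃ j, e j = x := by
      intro x
      have := Finset.range_orderEmbOfFin (Finset.univ.filter fun x => α x = true) hk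
      have h2 := Set.ext_iff.mp this x
      simp only [Set.mem_range, Finset.coe_filter, Finset.mem_univ, true_and,
        Set.mem_ofPred_eq] at h2
      exact h2.symm
    refine ⟨fun j => emX (e j), fun vv ww => ⟨⟨fun i => ⟨_, rfl⟩, ?_⟩, ?_⟩⟩
    · intro i i' hlt heq
      exact hlt.ne (e.injective (Sum.inl.inj heq))
    · rintro ⟨-, hD, hO⟩
      choose f hf using hD
      have hmono : StrictMono f := by
        intro a b hab
        obtain ⟨l, l', hl, h1, h2⟩ := hO a b hab
        rw [hf] at h1 h2
        have h1' : f a = l := by simpa [emD] using h1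
        have h2' : f b = l' := by simpa [emD] using h2
        rw [h1', h2']; exact hl
      have hw : ∀ l, ww l = emD l := fun l => by rw [hf, strictMono_fin_eq f hmono]
      classical
      obtain ⟨l, hl⟩ := h (fun y => decide (∃ j, vv j = emY y))
      refine ⟨l, fun d => (chiSat_iff δ _ vv ww α _ hw ?_ ?_ l d).mpr (hl d)⟩
      · intro x
        rw [he]
        simp [emX]
      · intro y
        simp
  · rintro ⟨uu, h⟩
    obtain ⟨⟨hX, hne⟩, -⟩ := h (fun _ => emStar) (fun l => emD l)
    choose a ha using hX
    have hinj : Function.Injective a := by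
      intro i j hij
      have : uu i = uu j := by rw [ha, ha, hij]
      rcases lt_trichotomy i j with hlt | heq | hlt
      · exact absurd this (hne _ _ hlt)
      · exact heq
      · exact absurd this.symm (hne _ _ hlt)
    classical
    refine ⟨fun x => decide (∃ j, a j = x), ?_, ?_⟩
    · have : (Finset.univ.filter fun x => decide (∃ j, a j = x) = true)
          = Finset.univ.image a := by
        ext x; simp
      unfold weight
      rw [this, Finset.card_image_of_injective _ hinj]
      simp
    · intro β
      obtain ⟨-, h2⟩ := h (fun j => if β j = true then emY j else emStar) (fun l => emD l)
      obtain ⟨l, hl⟩ := h2 ⟨fun j => by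
        by_cases hb : β j = true
        · exact Or.inl ⟨j, by simp [hb]⟩
        · exact Or.inr (by simp [hb]), fun l => ⟨l, rfl⟩, fun l l' hll => ⟨l, l', hll, rfl, rfl⟩⟩
      refine ⟨l, fun d => (chiSat_iff δ uu _ _ _ β (fun _ => rfl) ?_ ?_ l d).mp (hl d)⟩
      · intro x
        simp [ha, emX]
      · intro y
        constructor
        · intro hy
          exact ⟨y, by simp [hy]⟩
        · rintro ⟨j, hj⟩
          by_cases hb : β j = true
          · have : j = y := by simpa [hb, emY] using hj
            rw [← this]; exact hb
          · simp [hb, emY, emStar] at hj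
end

section
/- Let m, k ∈ ℕ and let g be an arbitrary predicate on truth assignments Fin m → Bool. Then the following are equivalent: (1) every truth assignment β : Fin m → Bool of weight k satisfies g; (2) every truth assignment γ : Fin k × Fin m → Bool of weight k satisfies at least one of the following three conditions: (a) there exist i ∈ Fin k and distinct j, j′ ∈ Fin m with γ(i,j) = true and γ(i,j′) = true; (b) the number of indices j ∈ Fin m such that for every i ∈ Fin k there exists some j′ ≠ j with γ(i,j′) = true, plus k, is at least m + 1; (c) g(β_γ) holds, where β_γ : Fin m → Bool is defined by β_γ(j) = true iff γ(i,j) = true for some i ∈ Fin k. -/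
theorem aux_card (m k : ℕ) (γ : Fin k × Fin m → Bool) (f : Fin k → Fin m)
    (hf : ∀ i j, γ (i, j) = true ↔ f i = j) :
    (Finset.univ.filter (fun j : Fin m =>
      ∀ i : Fin k, ∃ j' : Fin m, j' ≠ j ∧ γ (i, j') = true)).card
      + (Finset.univ.image f).card = m := by
  have h : (Finset.univ.filter (fun j : Fin m =>
      ∀ i : Fin k, ∃ j' : Fin m, j' ≠ j ∧ γ (i, j') = true)) = (Finset.univ.image f)ᶜ := by
    ext j
    simp [hf]
  rw [h, Finset.card_compl_add_card, Fintype.card_fin]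

/-- Correctness of the monotone-in-the-universal-variables construction: an arbitrary
predicate `g` holds for all weight-`k` assignments `β : Fin m → Bool` iff every weight-`k`
assignment `γ` to the `k × m` copy variables satisfies (a) some block contains two true
copies, or (b) at least `m - k + 1` of the "negation" nodes are true (expressed as
`m + 1 ≤ card + k`), or (c) `g` holds of the assignment decoded from `γ`. -/
theorem statement4 (m k : ℕ) (g : (Fin m → Bool) → Prop) :
    (∀ β : Fin m → Bool, weight β = k → g β) ↔
    (∀ γ : Fin k × Fin m → Bool, weight γ = k →
      ((∃ i : Fin k, ∃ j j' : Fin m, j ≠ j' ∧ γ (i, j) = true ∧ γ (i, j') = true) ∨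
       (m + 1 ≤
          (Finset.univ.filter (fun j : Fin m =>
            ∀ i : Fin k, ∃ j' : Fin m, j' ≠ j ∧ γ (i, j') = true)).card + k) ∨
       g (fun j : Fin m => decide (∃ i : Fin k, γ (i, j) = true)))) := by
  constructor
  · intro H γ hγ
    by_cases ha : ∃ i : Fin k, ∃ j j' : Fin m, j ≠ j' ∧ γ (i, j) = true ∧ γ (i, j') = true
    · exact Or.inl ha
    right
    have uniq : ∀ i j j', γ (i, j) = true → γ (i, j') = true → j = j' := by
      intro i j j' h1 h2
      by_contra hne
      exact ha ⟨i, j, j', hne, h1, h2⟩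
    have hcard : ((Finset.univ.filter fun x => γ x = true).image Prod.fst).card = k := by
      rw [Finset.card_image_of_injOn]
      · exact hγ
      · rintro ⟨i, j⟩ h1 ⟨i', j'⟩ h2 h
        simp only [Finset.coe_filter, Finset.mem_univ, true_and, Set.mem_setOf_eq] at h1 h2 h
        subst h
        rw [uniq _ _ _ h1 h2]
    have huniv : (Finset.univ.filter fun x => γ x = true).image Prod.fst = Finset.univ := by
      rw [← Finset.card_eq_iff_eq_univ, hcard, Fintype.card_fin]
    have hex : ∀ i, ∃ j, γ (i, j) = true := by
      intro i
      have hi := Finset.mem_univ i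
      rw [← huniv] at hi
      simpa using hi
    choose f hf using hex
    have hf' : ∀ i j, γ (i, j) = true ↔ f i = j := by
      intro i j
      constructor
      · intro h
        exact uniq _ _ _ (hf i) h
      · rintro rfl
        exact hf i
    have hc := aux_card m k γ f hf'
    by_cases hb : (Finset.univ.image f).card < k
    · left
      omega
    right
    apply H
    have hle : (Finset.univ.image f).card ≤ k := by
      simpa using (Finset.card_image_le (s := Finset.univ) (f := f))
    have heq : (Finset.univ.filter fun j : Fin m =>
        decide (∃ i : Fin k, γ (i, j) = true) = true) = Finset.univ.image f := by
      ext j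
      simp [hf']
    unfold weight
    rw [heq]
    omega
  · intro H β hβ
    let S := Finset.univ.filter fun x => β x = true
    have hS : S.card = k := hβ
    let f : Fin k → Fin m := S.orderEmbOfFin hS
    have finj : Function.Injective f := (S.orderEmbOfFin hS).injective
    have himg : Finset.univ.image f = S := Finset.image_orderEmbOfFin_univ S hS
    let γ : Fin k × Fin m → Bool := fun p => decide (f p.1 = p.2)
    have hf : ∀ i j, γ (i, j) = true ↔ f i = j := by
      intro i j
      simp [γ]
    have hw : weight γ = k := by
      have : (Finset.univ.filter fun x => γ x = true)
          = Finset.univ.image (fun i => (i, f i)) := by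
        ext ⟨i, j⟩
        simp [hf]
      unfold weight
      rw [this, Finset.card_image_of_injective _ (fun a b h => (Prod.ext_iff.1 h).1)]
      simp
    have hc := aux_card m k γ f hf
    rw [himg, hS] at hc
    rcases H γ hw with ⟨i, j, j', hne, h1, h2⟩ | hb | hg
    · exact absurd (((hf i j).1 h1).symm.trans ((hf i j').1 h2)) hne
    · omega
    · convert hg using 1
      funext j
      have hj : j ∈ Finset.univ.image f ↔ j ∈ S := by rw [himg]
      rw [Bool.eq_iff_iff]
      simp [S] at hj
      simp [hf, hj]
end

section
/- Let k ∈ ℕ and let ψ be a 3CNF formula over disjoint finite variable sets X and Y such that: (i) |X| ≥ 2k; (ii) for every truth assignment α : X → Bool whose weight is different from k, there is no truth assignment β : Y → Bool such that α ∪ β satisfies ψ; and (iii) every clause of ψ contains an occurrence of a variable from Y or a positive occurrence of a variable from X. Consider the Boolean constraint satisfaction instance with variable set Z = X ∪ {y^i : y ∈ Y, 1 ≤ i ≤ 2k+1}, domain {0,1}, whose constraints are the following clauses: for every clause c = l₁ ∨ l₂ ∨ l₃ of ψ and every choice, for t = 1,2,3, of a disjunction d_t — where d_t = l_t if the variable of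 l_t belongs to X, and d_t = l_t^{i₁} ∨ … ∨ l_t^{i_{k+1}} for some 1 ≤ i₁ < … < i_{k+1} ≤ 2k+1 if the variable y of l_t belongs to Y (here l_t^i denotes the literal on the copy y^i having the same sign as l_t) — the clause d₁ ∨ d₂ ∨ d₃. Then the following are equivalent: (1) for every truth assignment α : X → Bool of weight k there exists a truth assignment β : Y → Bool such that α ∪ β satisfies ψ; (2) the above constraint satisfaction instance is k-robustly satisfiable. -/
/-- The literals over `Z = X ∪ {y^i : y ∈ Y, 1 ≤ i ≤ 2k+1}` obtained from a literal `l`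
over `X ∪ Y`: a literal on a variable of `X` is kept, and a literal on a variable
`y ∈ Y` is replaced by the same-sign literals on the copies `y^i` for `i ∈ s`. -/
def litCopies {X Y : Type} (k : ℕ) (l : (X ⊕ Y) × Bool)
    (s : Finset (Fin (2 * k + 1))) :
    Set ((X ⊕ Y × Fin (2 * k + 1)) × Bool) :=
  match l with
  | (Sum.inl x, b) => {(Sum.inl x, b)}
  | (Sum.inr y, b) => {p | ∃ i ∈ s, p = (Sum.inr (y, i), b)}

/-- The clause `d₁ ∨ d₂ ∨ d₃` generated from the clause `c` of `ψ` and the choice `S` of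
`(k+1)`-subsets of copy indices for the `Y`-positions, viewed as the set of its literals. -/
def genClause {X Y : Type} {u : ℕ} (clauses : Fin u → Fin 3 → (X ⊕ Y) × Bool)
    (k : ℕ) (c : Fin u) (S : Fin 3 → Finset (Fin (2 * k + 1))) :
    Set ((X ⊕ Y × Fin (2 * k + 1)) × Bool) :=
  ⋃ t : Fin 3, litCopies k (clauses c t) (S t)

/-- The constraints of the constructed CSP instance: all clauses generated from a clause
of `ψ` and a choice, for each `Y`-position, of `k+1` copy indices. -/
def cspConstraints {X Y : Type} {u : ℕ} (clauses : Fin u → Fin 3 → (X ⊕ Y) × Bool)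
    (k : ℕ) : Set (Set ((X ⊕ Y × Fin (2 * k + 1)) × Bool)) :=
  {L | ∃ (c : Fin u) (S : Fin 3 → Finset (Fin (2 * k + 1))),
      (∀ t : Fin 3, (clauses c t).1.isRight = true → (S t).card = k + 1) ∧
      L = genClause clauses k c S}

/-- The number of variables on which the partial assignment `μ` is defined. -/
def domCard {Z : Type} [Fintype Z] (μ : Z → Option Bool) : ℕ :=
  (Finset.univ.filter fun z => (μ z).isSome = true).card

/-- A partial assignment `μ` violates a clause constraint `L` (given as a set of
literals) if every variable of `L` is in the domain of `μ` and `μ` makes every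
literal of `L` false. -/
def violates {Z : Type} (μ : Z → Option Bool) (L : Set (Z × Bool)) : Prop :=
  ∀ p ∈ L, μ p.1 = some (! p.2)

/-- A Boolean CSP instance over clause constraints `CC` is `k`-robustly satisfiable if
every partial assignment defined on exactly `k` variables that violates no constraint
extends to a total assignment satisfying all constraints. -/
def kRobustlySatisfiable {Z : Type} [Fintype Z] (CC : Set (Set (Z × Bool))) (k : ℕ) :
    Prop :=
  ∀ μ : Z → Option Bool, domCard μ = k → (∀ L ∈ CC, ¬ violates μ L) →
    ∃ ν : Z → Bool, (∀ z b, μ z = some b → ν z = b) ∧ ∀ L ∈ CC, ∃ p ∈ L, ν p.1 = p.2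

/-- Correctness of the reduction from ∀ᵏ∃*-WSat(3CNF) to Robust-CSP-SAT with domain size
two: under the hypotheses (i) `|X| ≥ 2k`, (ii) existential assignments whose weight
differs from `k` admit no completion satisfying `ψ`, and (iii) every clause of `ψ`
contains a `Y`-variable or a positive occurrence of an `X`-variable, the 3CNF instance
`∀X(weight k).∃Y.ψ` is true iff the constructed CSP instance is `k`-robustly
satisfiable. -/
theorem statement5 {X Y : Type} [Fintype X] [Fintype Y] (k : ℕ) {u : ℕ}
    (clauses : Fin u → Fin 3 → (X ⊕ Y) × Bool)
    (hXcard : 2 * k ≤ Fintype.card X)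
    (hweight : ∀ α : X → Bool, weight α ≠ k → ∀ β : Y → Bool,
        ¬ ∀ c : Fin u, ∃ t : Fin 3, Sum.elim α β (clauses c t).1 = (clauses c t).2)
    (hclause : ∀ c : Fin u, ∃ t : Fin 3,
        (clauses c t).1.isRight = true ∨
        ((clauses c t).1.isLeft = true ∧ (clauses c t).2 = true)) :
    ((∀ α : X → Bool, weight α = k →
        ∃ β : Y → Bool, ∀ c : Fin u, ∃ t : Fin 3,
          Sum.elim α β (clauses c t).1 = (clauses c t).2) ↔
      kRobustlySatisfiable (cspConstraints clauses k) k) := by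
  classical
  constructor
  · intro h μ hμ _
    -- the true and the unassigned variables of `X`
    set A : Finset X := Finset.univ.filter fun x => μ (Sum.inl x) = some true with hA
    set D : Finset X := Finset.univ.filter fun x => (μ (Sum.inl x)).isSome = true with hD
    have hAD : A ⊆ D := by
      intro x hx
      simp only [hA, hD, Finset.mem_filter, Finset.mem_univ, true_and] at hx ⊢
      simp [hx]
    have hDk : D.card ≤ k := by
      rw [← hμ, domCard]
      refine Finset.card_le_card_of_injOn (fun x => Sum.inl x) ?_ ?_
      · intro x hx
        simpa [hD] using hx
      · intro a _ b _ hab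
        exact Sum.inl_injective hab
    have hAk : A.card ≤ k := (Finset.card_le_card hAD).trans hDk
    have hsub : A ⊆ A ∪ Dᶜ := Finset.subset_union_left
    have hbig : k ≤ (A ∪ Dᶜ).card := by
      have h1 : Dᶜ.card ≤ (A ∪ Dᶜ).card := Finset.card_le_card Finset.subset_union_right
      rw [Finset.card_compl] at h1
      omega
    obtain ⟨T, hAT, hTU, hTk⟩ := Finset.exists_subsuperset_card_eq hsub hAk hbig
    obtain ⟨β, hβ⟩ := h (fun x => decide (x ∈ T)) (by simp [weight, hTk])
    refine ⟨fun z => (μ z).getD (Sum.elim (fun x => decide (x ∈ T)) (fun p => β p.1) z), ?_, ?_⟩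
    · intro z b hz
      simp [hz]
    · rintro L ⟨c, S, hS, rfl⟩
      obtain ⟨t, ht⟩ := hβ c
      have hSt := hS t
      have hmem : ∀ p ∈ litCopies k (clauses c t) (S t), p ∈ genClause clauses k c S :=
        fun p hp => Set.mem_iUnion.2 ⟨t, hp⟩
      rcases hl : clauses c t with ⟨x | y, b⟩
      · rw [hl] at ht hmem
        refine ⟨(Sum.inl x, b), hmem _ (by simp [litCopies]), ?_⟩
        simp only [Sum.elim_inl] at ht ⊢
        rcases hm : μ (Sum.inl x) with _ | b'
        · simpa using ht
        · simp only [Option.getD_some]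
          rw [← ht]
          cases b'
          · have h1 : x ∉ T := by
              intro hx
              have := hTU hx
              simp [hA, hD, hm] at this
            simp [h1]
          · have h1 : x ∈ T := hAT (by simp [hA, hm])
            simp [h1]
      · rw [hl] at ht hmem hSt
        have hcard : (S t).card = k + 1 := hSt rfl
        have : ∃ i ∈ S t, μ (Sum.inr (y, i)) = none := by
          by_contra hcon
          push Not at hcon
          have : (S t).card ≤ domCard μ := by
            refine Finset.card_le_card_of_injOn (fun i => Sum.inr (y, i)) ?_ ?_
            · intro i hi
              simpa [Option.isSome_iff_ne_none] using hcon i hi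
            · intro a _ b _ hab
              simpa using hab
          omega
        obtain ⟨i, hi, hin⟩ := this
        refine ⟨(Sum.inr (y, i), b), hmem _ ⟨i, hi, rfl⟩, ?_⟩
        simpa [hin] using ht
  · intro h α hα
    obtain ⟨ν, hν, hsat⟩ := h
      (Sum.elim (fun x => if α x = true then some true else none) (fun _ => none)) (by
        rw [← hα, domCard, weight]
        symm
        refine Finset.card_bij (fun x _ => Sum.inl x) ?_ ?_ ?_
        · intro x hx
          simpa using hx
        · intro a _ b _ hab
          exact Sum.inl_injective hab
        · rintro (x | y) hz
          · refine ⟨x, ?_, rfl⟩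
            by_cases hx : α x = true
            · simp [hx]
            · simp [hx] at hz
          · simp at hz) (by
        rintro L ⟨c, S, hS, rfl⟩ hviol
        obtain ⟨t, ht⟩ := hclause c
        have hSt := hS t
        have hmem : ∀ p ∈ litCopies k (clauses c t) (S t), p ∈ genClause clauses k c S :=
          fun p hp => Set.mem_iUnion.2 ⟨t, hp⟩
        rcases hl : clauses c t with ⟨x | y, b⟩
        · rw [hl] at ht hmem
          have := hviol _ (hmem (Sum.inl x, b) (by simp [litCopies]))
          simp at ht
          subst ht
          by_cases hx : α x = true <;> simp [hx] at this
        · rw [hl] at hmem hSt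
          have hcard : (S t).card = k + 1 := hSt rfl
          obtain ⟨i, hi⟩ := Finset.card_pos.1 (by omega : 0 < (S t).card)
          have := hviol _ (hmem (Sum.inr (y, i), b) ⟨i, hi, rfl⟩)
          simp at this)
    -- majority value of each `y`
    have hmaj : ∀ y : Y, ∃ b : Bool, ∃ s : Finset (Fin (2 * k + 1)), s.card = k + 1 ∧
        ∀ i ∈ s, ν (Sum.inr (y, i)) = b := by
      intro y
      have hsum := Finset.card_filter_add_card_filter_not
        (s := (Finset.univ : Finset (Fin (2 * k + 1)))) (fun i => ν (Sum.inr (y, i)) = true)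
      rw [Finset.card_univ, Fintype.card_fin] at hsum
      by_cases hb : k + 1 ≤ (Finset.univ.filter fun i : Fin (2 * k + 1) =>
          ν (Sum.inr (y, i)) = true).card
      · obtain ⟨s, hs, hc⟩ := Finset.exists_subset_card_eq hb
        exact ⟨true, s, hc, fun i hi => by simpa using hs hi⟩
      · have hb' : k + 1 ≤ (Finset.univ.filter fun i : Fin (2 * k + 1) =>
          ¬ ν (Sum.inr (y, i)) = true).card := by omega
        obtain ⟨s, hs, hc⟩ := Finset.exists_subset_card_eq hb'
        exact ⟨false, s, hc, fun i hi => by simpa using hs hi⟩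
    choose β s hs hβ using hmaj
    have hall : ∀ c : Fin u, ∃ t : Fin 3,
        Sum.elim (fun x => ν (Sum.inl x)) β (clauses c t).1 = (clauses c t).2 := by
      intro c
      obtain ⟨p, hp, hpν⟩ := hsat _ ⟨c, fun t => Sum.elim (fun _ => ∅) s (clauses c t).1, by
        intro t ht
        rcases hl : clauses c t with ⟨x | y, b⟩
        · simp [hl] at ht
        · simpa [hl] using hs y, rfl⟩
      obtain ⟨t, ht⟩ := Set.mem_iUnion.1 hp
      refine ⟨t, ?_⟩
      rcases hl : clauses c t with ⟨x | y, b⟩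
      · simp only [hl, litCopies, Set.mem_singleton_iff] at ht
        subst ht
        simpa using hpν
      · simp only [hl, litCopies, Set.mem_ofPred_eq, Sum.elim_inr] at ht
        obtain ⟨i, hi, rfl⟩ := ht
        simp only at hpν
        simp only [Sum.elim_inr]
        rw [← hpν, hβ y i hi]
    have hw : weight (fun x => ν (Sum.inl x)) = k := by
      by_contra hne
      exact hweight _ hne β hall
    have hsubs : (Finset.univ.filter fun x => α x = true) ⊆
        Finset.univ.filter fun x => ν (Sum.inl x) = true := by
      intro x hx
      simp only [Finset.mem_filter, Finset.mem_univ, true_and] at hx ⊢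
      exact hν (Sum.inl x) true (by simp [hx])
    have heq := Finset.eq_of_subset_of_card_le hsubs (by
      change weight (fun x => ν (Sum.inl x)) ≤ weight α
      rw [hw, hα])
    have hαν : α = fun x => ν (Sum.inl x) := by
      funext x
      have := Finset.ext_iff.1 heq x
      simp only [Finset.mem_filter, Finset.mem_univ, true_and] at this
      exact Bool.eq_iff_iff.2 this
    exact ⟨β, by rw [hαν]; exact hall⟩
end

section
/- Let X and Y be disjoint finite sets of propositional variables, let k ∈ ℕ, and let ψ be a 2CNF formula each of whose clauses either consists of two negative literals on two distinct variables of X, or consists of one negative literal on a variable of X together with one literal (positive or negative) on a variable of Y. Let G be the graph with vertex set V = {v_y, v_{¬y} : y ∈ Y} ∪ {v_x : x ∈ X}, let V′ = {v_y, v_{¬y} : y ∈ Y}, and let the edges of G be: all pairs of distinct vertices of V′ except the pairs {v_y, v_{¬y}} for y ∈ Y; the pairs {v_x, v_{x′}} for distinct x, x′ ∈ X such that (¬x ∨ ¬x′) is not a clause of ψ; the pairs {v_x, v_y} for x ∈ X, y ∈ Y such that (¬x ∨ ¬y) is not a clause of ψ; and the pairs {v_x, v_{¬y}} for x ∈ X,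 y ∈ Y such that (¬x ∨ y) is not a clause of ψ. Then the following are equivalent: (1) for every truth assignment α : Y → Bool there exists a truth assignment β : X → Bool of weight k such that α ∪ β satisfies ψ; (2) for every clique C ⊆ V′ of G there exists a set D of k vertices of G, disjoint from C, such that C ∪ D is a clique of G (of size |C| + k). -/
/-- The adjacency relation of the graph `G` constructed from the 2CNF formula `ψ`:
the vertex `Sum.inl (y, true)` is `v_y`, the vertex `Sum.inl (y, false)` is `v_{¬y}`,
and the vertex `Sum.inr x` is `v_x`.  Here `cXX x x'` says that `(¬x ∨ ¬x')` is a
clause of `ψ`, and `cXY x y s` says that the clause `(¬x ∨ y)` (if `s = true`) resp.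
`(¬x ∨ ¬y)` (if `s = false`) belongs to `ψ`. -/
def adj6 {X Y : Type} (cXX : X → X → Prop) (cXY : X → Y → Bool → Prop) :
    (Y × Bool) ⊕ X → (Y × Bool) ⊕ X → Prop
  | Sum.inl (y, _), Sum.inl (y', _) => y ≠ y'
  | Sum.inl (y, b), Sum.inr a => ¬ cXY a y (!b)
  | Sum.inr a, Sum.inl (y, b) => ¬ cXY a y (!b)
  | Sum.inr a, Sum.inr a' => a ≠ a' ∧ ¬ cXX a a'

/-- Correctness of the reduction from ∀*∃ᵏ-WSat(2CNF) (for formulas that are antimonotone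
in the existential variables `X`) to Small-Clique-Extension: for every assignment `α` to
`Y` there is a weight-`k` assignment `β` to `X` such that `α ∪ β` satisfies `ψ` iff every
clique `C ⊆ V' = {v_y, v_{¬y} : y ∈ Y}` of the constructed graph can be extended by `k`
further vertices to a clique of size `|C| + k`. -/
theorem statement6 {X Y : Type} [Fintype X] [Fintype Y] [DecidableEq X] [DecidableEq Y]
    (k : ℕ) (cXX : X → X → Prop) (cXY : X → Y → Bool → Prop)
    (hsymm : ∀ a b, cXX a b → cXX b a)
    (hdistinct : ∀ a b, cXX a b → a ≠ b) :
    ((∀ α : Y → Bool, ∃ β : X → Bool, weight β = k ∧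
        (∀ a b, cXX a b → (β a = false ∨ β b = false)) ∧
        (∀ a y s, cXY a y s → (β a = false ∨ α y = s))) ↔
      (∀ C : Finset ((Y × Bool) ⊕ X),
        (∀ p ∈ C, p.isLeft = true) →
        (∀ p ∈ C, ∀ q ∈ C, p ≠ q → adj6 cXX cXY p q) →
        ∃ D : Finset ((Y × Bool) ⊕ X),
          D.card = k ∧ Disjoint C D ∧
          (∀ p ∈ C ∪ D, ∀ q ∈ C ∪ D, p ≠ q → adj6 cXX cXY p q))) := by
  constructor
  · intro h C hL hC
    obtain ⟨β, hw, h1, h2⟩ := h (fun y => decide (Sum.inl (y, true) ∈ C))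
    have hα : ∀ y b, (Sum.inl (y, b) : (Y × Bool) ⊕ X) ∈ C →
        decide ((Sum.inl (y, true) : (Y × Bool) ⊕ X) ∈ C) = b := by
      intro y b hb
      cases b with
      | true => simpa using hb
      | false =>
        simp only [decide_eq_false_iff_not]
        intro ht
        have := hC _ ht _ hb (by simp)
        simp [adj6] at this
    have key : ∀ y b a, (Sum.inl (y, b) : (Y × Bool) ⊕ X) ∈ C → β a = true →
        ¬ cXY a y (!b) := by
      intro y b a hb ha hc
      have e := hα y b hb
      rcases h2 _ _ _ hc with h | h
      · simp [ha] at h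
      · simp only [e] at h
        cases b <;> simp at h
    refine ⟨(Finset.univ.filter fun x => β x = true).map ⟨Sum.inr, Sum.inr_injective⟩, ?_, ?_, ?_⟩
    · rw [Finset.card_map]; exact hw
    · rw [Finset.disjoint_left]
      intro p hp hq
      have := hL p hp
      simp only [Finset.mem_map, Function.Embedding.coeFn_mk] at hq
      obtain ⟨a, _, rfl⟩ := hq
      simp at this
    · have hm : ∀ p ∈ C ∪ (Finset.univ.filter fun x => β x = true).map
          ⟨Sum.inr, Sum.inr_injective⟩, p ∈ C ∨ ∃ a, β a = true ∧ Sum.inr a = p := by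
        intro p hp
        simpa using hp
      intro p hp q hq hne
      rcases hm p hp with hp | ⟨a, ha, rfl⟩ <;> rcases hm q hq with hq | ⟨a', ha', rfl⟩
      · exact hC p hp q hq hne
      · rcases p with ⟨y, b⟩ | x
        · exact key y b a' hp ha'
        · simpa using hL _ hp
      · rcases q with ⟨y, b⟩ | x
        · exact key y b a hq ha
        · simpa using hL _ hq
      · refine ⟨fun e => hne (by rw [e]), fun hc => ?_⟩
        rcases h1 _ _ hc with h | h <;> simp_all
  · intro h α
    have hmem : ∀ y, (Sum.inl (y, α y) : (Y × Bool) ⊕ X) ∈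
        Finset.univ.image (fun y => (Sum.inl (y, α y) : (Y × Bool) ⊕ X)) := fun y =>
      Finset.mem_image_of_mem _ (Finset.mem_univ y)
    obtain ⟨D, hk, hd, hA⟩ := h (Finset.univ.image fun y => Sum.inl (y, α y))
      (by
        intro p hp
        obtain ⟨y, _, rfl⟩ := Finset.mem_image.1 hp
        rfl)
      (by
        intro p hp q hq hne
        obtain ⟨y, _, rfl⟩ := Finset.mem_image.1 hp
        obtain ⟨z, _, rfl⟩ := Finset.mem_image.1 hq
        intro e
        exact hne (by rw [e]))
    have hD : ∀ y b, (Sum.inl (y, b) : (Y × Bool) ⊕ X) ∉ D := by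
      intro y b hb
      have hne : (Sum.inl (y, α y) : (Y × Bool) ⊕ X) ≠ Sum.inl (y, b) := fun e =>
        Finset.disjoint_left.1 hd (hmem y) (e ▸ hb)
      exact hA _ (Finset.mem_union_left _ (hmem y)) _ (Finset.mem_union_right _ hb) hne rfl
    refine ⟨fun a => decide (Sum.inr a ∈ D), ?_, ?_, ?_⟩
    · rw [← hk]
      unfold weight
      rw [← Finset.card_map ⟨(Sum.inr : X → (Y × Bool) ⊕ X), Sum.inr_injective⟩]
      congr 1
      ext p
      rcases p with ⟨y, b⟩ | x
      · simp [hD]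
      · simp
    · intro a b hc
      by_contra hcon
      simp only [decide_eq_false_iff_not, not_or, not_not] at hcon
      have := hA _ (Finset.mem_union_right _ hcon.1) _ (Finset.mem_union_right _ hcon.2)
        (fun e => hdistinct a b hc (Sum.inr_injective e))
      exact this.2 hc
    · intro a y s hc
      by_contra hcon
      simp only [decide_eq_false_iff_not, not_or, not_not] at hcon
      have : ¬ cXY a y (!(α y)) := hA _ (Finset.mem_union_right _ hcon.1) _
        (Finset.mem_union_left _ (hmem y)) (by simp)
      apply this
      have e : (!(α y)) = s := by
        have := hcon.2
        revert this
        cases α y <;> cases s <;> simp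
      rw [e]; exact hc
end

section
/- Let G = (V, E) be a finite simple graph, let V′ ⊆ V, and let k ∈ ℕ. Then the following are equivalent: (1) for every clique C ⊆ V′ of G there exists a set D of k vertices such that C ∪ D is a clique of G of size |C| + k; (2) for every function α : V′ → Bool there exists a function β : V → Bool of weight k such that at least one of the following holds: (a) there exist distinct non-adjacent vertices u, w ∈ V′ with α(u) = α(w) = true; or (b) both of the following hold: for every v′ ∈ V′ it is not the case that α(v′) = true and β(v′) = true, and for every pair of distinct non-adjacent vertices u, w ∈ V it is not the case that sel(u) and sel(w) both hold, where sel(v) means β(v) = true or (v ∈ V′ and α(v) = true). -/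
/-- Correctness of the reduction showing membership of Small-Clique-Extension in the
class ∀*∃ᵏ-W[1]: every clique `C ⊆ V'` of `G` extends by `k` vertices to a clique of
size `|C| + k` iff for every `α : V' → Bool` there is a weight-`k` function
`β : V → Bool` such that either (a) `α` selects two distinct non-adjacent vertices
of `V'`, or (b) `β` is disjoint from the selection of `α` on `V'` and the set of all
selected vertices (by `β`, or by `α` within `V'`) is a clique. -/
theorem statement7 {V : Type} [Fintype V] [DecidableEq V]
    (G : SimpleGraph V) (V' : Set V) (k : ℕ) :
    ((∀ C : Finset V, ↑C ⊆ V' → G.IsClique (C : Set V) →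
        ∃ D : Finset V, D.card = k ∧ (C ∪ D).card = C.card + k ∧
          G.IsClique ((C ∪ D : Finset V) : Set V)) ↔
      (∀ α : V' → Bool, ∃ β : V → Bool, weight β = k ∧
        ((∃ u w : V', u ≠ w ∧ ¬ G.Adj (u : V) (w : V) ∧ α u = true ∧ α w = true) ∨
         ((∀ v' : V', ¬ (α v' = true ∧ β (v' : V) = true)) ∧
          (∀ u w : V, u ≠ w → ¬ G.Adj u w →
            ¬ ((β u = true ∨ ∃ h : u ∈ V', α ⟨u, h⟩ = true) ∧
               (β w = true ∨ ∃ h : w ∈ V', α ⟨w, h⟩ = true))))))) := by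
  classical
  constructor
  · intro H α
    by_cases hc : ∃ u w : V', u ≠ w ∧ ¬ G.Adj (u : V) (w : V) ∧ α u = true ∧ α w = true
    · obtain ⟨D, hD, -, -⟩ := H ∅ (by simp) (by simp)
      exact ⟨fun v => decide (v ∈ D), by simp [weight, hD], Or.inl hc⟩
    · let C : Finset V := Finset.univ.filter fun v => ∃ h : v ∈ V', α ⟨v, h⟩ = true
      have hC : ∀ v, v ∈ C ↔ ∃ h : v ∈ V', α ⟨v, h⟩ = true := by simp [C]
      obtain ⟨D, hD, hcard, hcl⟩ := H C
        (fun v hv => ((hC v).1 (Finset.mem_coe.1 hv)).1)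
        (by
          intro u hu w hw huw
          obtain ⟨hu1, hu2⟩ := (hC u).1 (Finset.mem_coe.1 hu)
          obtain ⟨hw1, hw2⟩ := (hC w).1 (Finset.mem_coe.1 hw)
          by_contra hn
          exact hc ⟨⟨u, hu1⟩, ⟨w, hw1⟩, fun h => huw (congrArg Subtype.val h), hn, hu2, hw2⟩)
      have hdisj : Disjoint C D := by
        rw [← Finset.card_union_eq_card_add_card, hcard, hD]
      refine ⟨fun v => decide (v ∈ D), by simp [weight, hD], Or.inr ⟨?_, ?_⟩⟩
      · rintro ⟨v, hv⟩ ⟨h1, h2⟩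
        exact Finset.disjoint_left.1 hdisj ((hC v).2 ⟨hv, h1⟩) (of_decide_eq_true h2)
      · rintro u w huw hn ⟨h1, h2⟩
        rw [← hC, decide_eq_true_iff] at h1 h2
        exact hn (hcl (Finset.mem_coe.2 (Finset.mem_union.2 h1.symm))
          (Finset.mem_coe.2 (Finset.mem_union.2 h2.symm)) huw)
  · intro H C hCV hC
    obtain ⟨β, hβ, h⟩ := H fun v => decide ((v : V) ∈ C)
    rcases h with ⟨u, w, huw, hn, h1, h2⟩ | ⟨hd, hcl⟩
    · exact absurd (hC (Finset.mem_coe.2 (of_decide_eq_true h1))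
        (Finset.mem_coe.2 (of_decide_eq_true h2)) (fun h => huw (Subtype.ext h))) hn
    · have hs : ∀ v, v ∈ C ∪ Finset.univ.filter (fun x => β x = true) →
          (β v = true ∨ ∃ h : v ∈ V', decide (v ∈ C) = true) := by
        intro v hv
        rcases Finset.mem_union.1 hv with h | h
        · exact Or.inr ⟨hCV (Finset.mem_coe.2 h), decide_eq_true h⟩
        · exact Or.inl (Finset.mem_filter.1 h).2
      refine ⟨Finset.univ.filter fun x => β x = true, hβ, ?_, ?_⟩
      · rw [Finset.card_union_of_disjoint, ← hβ, weight]
        rw [Finset.disjoint_left]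
        intro v hv hv2
        exact hd ⟨v, hCV (Finset.mem_coe.2 hv)⟩ ⟨decide_eq_true hv, (Finset.mem_filter.1 hv2).2⟩
      · intro u hu w hw huw
        by_contra hn
        exact hcl u w huw hn ⟨hs u (Finset.mem_coe.1 hu), hs w (Finset.mem_coe.1 hw)⟩
end

section
/- Let X₁ and X₂ be finite sets, let k ∈ ℕ, and for i ∈ {1,2} let X_i be partitioned into k pairwise disjoint (possibly empty) blocks B^i_1,…,B^i_k whose union is X_i. For a function γ defined on the set of pairs (j, α) with 1 ≤ j ≤ k and α : B^i_j → Bool, taking values in Bool, say that γ is block-unique if for every j there is at most one local assignment α : B^i_j → Bool with γ(j, α) = true, let the weight of γ be the number of pairs mapped to true, and define dec(γ) : X_i → Bool by dec(γ)(x) = true iff γ(j, α) = true for some local assignment α of the block B^i_j containing x with α(x) = true. Let f be an arbitrary predicate on pairs of truth assignments (X₁ → Bool) × (X₂ → Bool). Then the following are equivalent: (1) there exists β₁ : X₁ → Bool such that for every β₂ : X₂ → Bool, f(β₁, β₂) holds; (2) there exists a block-unique γ₁ of weight k (over the blocks of X₁) such that for every block-unique γ₂ of weight k (over the blocks of X₂),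 f(dec(γ₁), dec(γ₂)) holds. -/
/-- `γ` (a Boolean selection of pairs `(j, local assignment of block j)`) is
block-unique: for every block `j`, at most one local assignment is selected. -/
def blockUnique {X : Type} {k : ℕ} (blk : X → Fin k)
    (γ : (j : Fin k) → ({x : X // blk x = j} → Bool) → Bool) : Prop :=
  ∀ (j : Fin k) (α α' : {x : X // blk x = j} → Bool),
    γ j α = true → γ j α' = true → α = α'

/-- The weight of `γ`: the number of pairs `(j, local assignment)` mapped to true. -/
def gweight {X : Type} {k : ℕ} [Fintype X] [DecidableEq X] (blk : X → Fin k)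
    (γ : (j : Fin k) → ({x : X // blk x = j} → Bool) → Bool) : ℕ :=
  (Finset.univ.filter
    (fun p : Σ j : Fin k, ({x : X // blk x = j} → Bool) => γ p.1 p.2 = true)).card

/-- Decoding `γ` to a truth assignment on `X`: `x` is true iff some selected local
assignment of the block of `x` makes `x` true. -/
def decodeBlocks {X : Type} {k : ℕ} [Fintype X] [DecidableEq X] (blk : X → Fin k)
    (γ : (j : Fin k) → ({x : X // blk x = j} → Bool) → Bool) : X → Bool :=
  fun x => decide (∃ α : {x' : X // blk x' = blk x} → Bool,
    γ (blk x) α = true ∧ α ⟨x, rfl⟩ = true)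

/-- Every truth assignment is the decoding of a block-unique selection of weight `k`. -/
theorem exists_encoding {X : Type} {k : ℕ} [Fintype X] [DecidableEq X] (blk : X → Fin k)
    (β : X → Bool) : ∃ γ : (j : Fin k) → ({x : X // blk x = j} → Bool) → Bool,
      blockUnique blk γ ∧ gweight blk γ = k ∧ decodeBlocks blk γ = β := by
  refine ⟨fun j α => decide (α = fun x => β x.1), ?_, ?_, ?_⟩
  · intro j α α' h h'
    rw [decide_eq_true_eq] at h h'
    rw [h, h']
  · unfold gweight
    have h : (Finset.univ.filter
        (fun p : Σ j : Fin k, ({x : X // blk x = j} → Bool) =>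
          decide (p.2 = fun x => β x.1) = true)) =
        (Finset.univ : Finset (Fin k)).image
          (fun j => (⟨j, fun x => β x.1⟩ : Σ j : Fin k, ({x : X // blk x = j} → Bool))) := by
      ext ⟨j, α⟩
      simp only [Finset.mem_filter, Finset.mem_univ, true_and, Finset.mem_image,
        decide_eq_true_eq]
      constructor
      · intro h
        exact ⟨j, by rw [h]⟩
      · rintro ⟨j', h⟩
        cases h
        rfl
    rw [h, Finset.card_image_of_injective]
    · simp
    · intro a b hab
      exact congrArg Sigma.fst hab
  · funext x
    simp [decodeBlocks]

/-- Block-encoding equivalence used in the subexponential-time reduction from QSat₂: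
partitioning each of `X₁`, `X₂` into `k` blocks (given by `blk₁`, `blk₂`) and replacing
each block by indicator variables for its local assignments, the ∃∀-statement for an
arbitrary predicate `f` holds iff the corresponding ∃∀-statement over weight-`k`
block-unique selections holds. -/
theorem statement8 {X₁ X₂ : Type} [Fintype X₁] [Fintype X₂]
    [DecidableEq X₁] [DecidableEq X₂] (k : ℕ)
    (blk₁ : X₁ → Fin k) (blk₂ : X₂ → Fin k)
    (f : (X₁ → Bool) → (X₂ → Bool) → Prop) :
    ((∃ β₁ : X₁ → Bool, ∀ β₂ : X₂ → Bool, f β₁ β₂) ↔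
      (∃ γ₁ : (j : Fin k) → ({x : X₁ // blk₁ x = j} → Bool) → Bool,
        blockUnique blk₁ γ₁ ∧ gweight blk₁ γ₁ = k ∧
        ∀ γ₂ : (j : Fin k) → ({x : X₂ // blk₂ x = j} → Bool) → Bool,
          blockUnique blk₂ γ₂ → gweight blk₂ γ₂ = k →
          f (decodeBlocks blk₁ γ₁) (decodeBlocks blk₂ γ₂))) := by
  constructor
  · rintro ⟨β₁, h⟩
    obtain ⟨γ₁, hu, hw, rfl⟩ := exists_encoding blk₁ β₁
    exact ⟨γ₁, hu, hw, fun γ₂ _ _ => h _⟩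
  · rintro ⟨γ₁, _, _, h⟩
    refine ⟨decodeBlocks blk₁ γ₁, fun β₂ => ?_⟩
    obtain ⟨γ₂, hu, hw, rfl⟩ := exists_encoding blk₂ β₂
    exact h γ₂ hu hw
end

section
/- Let P be a disjunctive logic program and let M be an answer set of P. Then Comp(P) ⊆ M, i.e., every answer set of P contains every compulsory atom of P. -/
/-- A rule of a disjunctive logic program: `head` is the (disjunctive) head,
`pos` the positive body atoms and `neg` the (default-negated) negative body atoms. -/
structure Rule (A : Type) where
  head : Finset A
  pos : Finset A
  neg : Finset A

namespace Rule
variable {A : Type}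

/-- A rule is normal if its head contains at most one atom. -/
def isNormal (r : Rule A) : Prop := r.head.card ≤ 1

/-- A rule is disjunctive if its head contains more than one atom. -/
def isDisjunctive (r : Rule A) : Prop := 1 < r.head.card

/-- A rule is negation-free if its negative body is empty. -/
def negFree (r : Rule A) : Prop := r.neg = ∅

/-- A set `M` of atoms satisfies a (negation-free) rule if, whenever all atoms of the
positive body belong to `M`, some head atom belongs to `M`. -/
def satisfiedBy (r : Rule A) (M : Set A) : Prop :=
  (∀ b ∈ r.pos, b ∈ M) → ∃ a ∈ r.head, a ∈ M

end Rule

/-- The set of atoms occurring in a program. -/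
def progAtoms {A : Type} (P : Set (Rule A)) : Set A :=
  {a | ∃ r ∈ P, a ∈ r.head ∨ a ∈ r.pos ∨ a ∈ r.neg}

/-- `M` is a model of the (negation-free) program `P`. -/
def isModel {A : Type} (P : Set (Rule A)) (M : Set A) : Prop :=
  ∀ r ∈ P, r.satisfiedBy M

/-- `M` is a minimal model of the (negation-free) program `P`. -/
def isMinimalModel {A : Type} (P : Set (Rule A)) (M : Set A) : Prop :=
  isModel P M ∧ ∀ M' : Set A, M' ⊂ M → ¬ isModel P M'

/-- The GL reduct of `P` with respect to `M`: remove every rule whose negative body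
meets `M`, and delete the negative bodies of the remaining rules. -/
def reduct {A : Type} (P : Set (Rule A)) (M : Set A) : Set (Rule A) :=
  {r' | ∃ r ∈ P, (∀ c ∈ r.neg, c ∉ M) ∧ r' = ⟨r.head, r.pos, ∅⟩}

/-- An answer set of `P` is a set `M ⊆ Atoms(P)` that is a subset-minimal model
of the reduct `P^M`. -/
def isAnswerSet {A : Type} (P : Set (Rule A)) (M : Set A) : Prop :=
  M ⊆ progAtoms P ∧ isMinimalModel (reduct P M) M

/-- The compulsory atoms `Comp(P)`: the smallest set of atoms such that (i) if
`(w ← not w)` is a rule of `P` then `w` is compulsory, and (ii) if `(b ← a₁,…,aₙ)`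
is a normal negation-free rule of `P` all of whose body atoms are compulsory,
then `b` is compulsory. -/
inductive Compulsory {A : Type} (P : Set (Rule A)) : A → Prop
  | loop (w : A) : (⟨{w}, ∅, {w}⟩ : Rule A) ∈ P → Compulsory P w
  | rule (r : Rule A) (b : A) : r ∈ P → r.head = {b} → r.neg = ∅ →
      (∀ a ∈ r.pos, Compulsory P a) → Compulsory P b

/-- The contingent atoms `Cont(P) = Atoms(P) ∖ Comp(P)`. -/
def ContingentAtoms {A : Type} (P : Set (Rule A)) : Set A :=
  progAtoms P \ {a | Compulsory P a}

/-- A rule of `P` is contingent if its head contains a contingent atom. -/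
def isContingentRule {A : Type} (P : Set (Rule A)) (r : Rule A) : Prop :=
  r ∈ P ∧ ∃ a ∈ r.head, a ∈ ContingentAtoms P

/-- Every answer set of a disjunctive logic program contains every compulsory atom. -/
theorem statement11 {A : Type} (P : Set (Rule A)) (hfin : P.Finite)
    (M : Set A) (hM : isAnswerSet P M) :
    ∀ a : A, Compulsory P a → a ∈ M := by
  intro a ha
  have hmod := hM.2.1
  induction ha with
  | loop w hw =>
    by_contra hn
    obtain ⟨x, hx, hxM⟩ := hmod ⟨{w}, ∅, ∅⟩
      ⟨_, hw, fun c hc => by rw [Finset.mem_singleton.1 hc]; exact hn, rfl⟩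
      (fun b hb => absurd hb (Finset.notMem_empty b))
    exact hn (Finset.mem_singleton.1 hx ▸ hxM)
  | rule r b hr hh hneg _ ih =>
    obtain ⟨x, hx, hxM⟩ := hmod ⟨r.head, r.pos, ∅⟩
      ⟨r, hr, fun c hc => by simp [hneg] at hc, rfl⟩ ih
    have hx' : x ∈ r.head := hx
    rw [hh, Finset.mem_singleton] at hx'
    exact hx' ▸ hxM
end

section
/- Let P be a disjunctive logic program and let x be an atom having exactly ℓ ≥ 3 occurrences in P (counting all occurrences of x in heads, positive bodies and negative bodies of rules of P). Let x₁,…,x_ℓ be fresh atoms not occurring in P, and let P′ be obtained from P by replacing, for each j = 1,…,ℓ, the j-th occurrence of x by x_j, and adding the rules (x_{j+1} ← x_j) for every 1 ≤ j < ℓ together with the rule (x₁ ← x_ℓ). Then P has an answer set if and only if P′ has an answer set. -/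
/-- The three parts (head, positive body, negative body) of a rule, in which an atom
can occur; used to enumerate the occurrences of an atom in a program. -/
def occPart {A : Type} (r : Rule A) : Fin 3 → Finset A := ![r.head, r.pos, r.neg]

/-- Replace every occurrence of the atom `x` by the atom `y` in the finite set `s`. -/
def substAtom {A : Type} [DecidableEq A] (x y : A) (s : Finset A) : Finset A :=
  s.image (fun a => if a = x then y else a)

/-- The transformed program. -/
def copyProg {A : Type} [DecidableEq A] (P : Set (Rule A)) (x : A) (ℓ : ℕ) (f : ℕ → A)
    (idx : Rule A → Fin 3 → ℕ) : Set (Rule A) :=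
  {r' : Rule A | ∃ r ∈ P, r' = ⟨substAtom x (f (idx r 0)) r.head,
            substAtom x (f (idx r 1)) r.pos,
            substAtom x (f (idx r 2)) r.neg⟩}
          ∪ {r' : Rule A | ∃ j : ℕ, j + 1 < ℓ ∧ r' = ⟨{f (j + 1)}, {f j}, ∅⟩}
          ∪ {(⟨{f 0}, {f (ℓ - 1)}, ∅⟩ : Rule A)}

/-- Interpretations of `P` to interpretations of the transformed program. -/
def upSet {A : Type} (x : A) (ℓ : ℕ) (f : ℕ → A) (M : Set A) : Set A :=
  {a | (a ≠ x ∧ (∀ j, j < ℓ → f j ≠ a) ∧ a ∈ M) ∨ ((∃ j, j < ℓ ∧ f j = a) ∧ x ∈ M)}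

/-- Interpretations of the transformed program to interpretations of `P`. -/
def downSet {A : Type} (x : A) (ℓ : ℕ) (f : ℕ → A) (M : Set A) : Set A :=
  {a | (a ≠ x ∧ (∀ j, j < ℓ → f j ≠ a) ∧ a ∈ M) ∨ (a = x ∧ f 0 ∈ M)}

theorem subst_mem_up {A : Type} [DecidableEq A] {x : A} {ℓ : ℕ} {f : ℕ → A}
    (hx : ∀ j, j < ℓ → f j ≠ x) {M : Set A} {a : A} {i : ℕ}
    (hi : a = x → i < ℓ) (ha : ∀ j, j < ℓ → f j ≠ a) :
    (if a = x then f i else a) ∈ upSet x ℓ f M ↔ a ∈ M := by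
  by_cases h : a = x
  · subst h
    simp only [if_true, upSet, Set.mem_ofPred_eq]
    constructor
    · rintro (⟨_, h, _⟩ | ⟨_, h⟩)
      · exact absurd rfl (h i (hi rfl))
      · exact h
    · intro h
      exact Or.inr ⟨⟨i, hi rfl, rfl⟩, h⟩
  · simp only [if_neg h, upSet, Set.mem_ofPred_eq]
    constructor
    · rintro (⟨_, _, h⟩ | ⟨⟨j, hj, e⟩, _⟩)
      · exact h
      · exact absurd e (ha j hj)
    · intro h'
      exact Or.inl ⟨h, ha, h'⟩

theorem up_model_iff {A : Type} [DecidableEq A] {P : Set (Rule A)}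
    {x : A} {ℓ : ℕ} (hℓ : 3 ≤ ℓ) {f : ℕ → A}
    (hx : ∀ j, j < ℓ → f j ≠ x)
    (hf_fresh : ∀ j, j < ℓ → f j ∉ progAtoms P)
    {idx : Rule A → Fin 3 → ℕ}
    (hidx_lt : ∀ r ∈ P, ∀ t : Fin 3, x ∈ occPart r t → idx r t < ℓ) (M N : Set A) :
    isModel (reduct (copyProg P x ℓ f idx) (upSet x ℓ f M)) (upSet x ℓ f N) ↔
      isModel (reduct P M) N := by
  have fr : ∀ r ∈ P, ∀ a, (a ∈ r.head ∨ a ∈ r.pos ∨ a ∈ r.neg) → ∀ j, j < ℓ → f j ≠ a := by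
    intro r hr a ha j hj e
    exact hf_fresh j hj ⟨r, hr, e ▸ ha⟩
  have H0 : ∀ r ∈ P, ∀ K : Set A, ∀ a ∈ r.head,
      ((if a = x then f (idx r 0) else a) ∈ upSet x ℓ f K ↔ a ∈ K) := by
    intro r hr K a ha
    exact subst_mem_up hx (fun e => hidx_lt r hr 0 (by subst e; exact ha))
      (fr r hr a (Or.inl ha))
  have H1 : ∀ r ∈ P, ∀ K : Set A, ∀ a ∈ r.pos,
      ((if a = x then f (idx r 1) else a) ∈ upSet x ℓ f K ↔ a ∈ K) := by
    intro r hr K a ha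
    exact subst_mem_up hx (fun e => hidx_lt r hr 1 (by subst e; exact ha))
      (fr r hr a (Or.inr (Or.inl ha)))
  have H2 : ∀ r ∈ P, ∀ K : Set A, ∀ a ∈ r.neg,
      ((if a = x then f (idx r 2) else a) ∈ upSet x ℓ f K ↔ a ∈ K) := by
    intro r hr K a ha
    exact subst_mem_up hx (fun e => hidx_lt r hr 2 (by subst e; exact ha))
      (fr r hr a (Or.inr (Or.inr ha)))
  have key : ∀ i j : ℕ, i < ℓ → j < ℓ → f i ∈ upSet x ℓ f N → f j ∈ upSet x ℓ f N := by
    rintro i j hi hj (⟨_, h, _⟩ | ⟨_, h⟩)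
    · exact absurd rfl (h i hi)
    · exact Or.inr ⟨⟨j, hj, rfl⟩, h⟩
  constructor
  · rintro h _ ⟨r, hr, hn, rfl⟩ hb
    have h1 := h _ ⟨_, Or.inl (Or.inl ⟨r, hr, rfl⟩), ?_, rfl⟩ ?_
    · obtain ⟨a, ha, haN⟩ := h1
      obtain ⟨b, hb, rfl⟩ := Finset.mem_image.1 ha
      exact ⟨b, hb, (H0 r hr N b hb).1 haN⟩
    · intro c hc hcM
      obtain ⟨b, hb, rfl⟩ := Finset.mem_image.1 hc
      exact hn b hb ((H2 r hr M b hb).1 hcM)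
    · intro c hc
      obtain ⟨b, hb', rfl⟩ := Finset.mem_image.1 hc
      exact (H1 r hr N b hb').2 (hb b hb')
  · rintro h _ ⟨_, ((⟨r, hr, rfl⟩ | ⟨j, hj, rfl⟩) | rfl), hn, rfl⟩ hb
    · obtain ⟨a, ha, haN⟩ := h ⟨r.head, r.pos, ∅⟩ ⟨r, hr, fun c hc hcM =>
        hn _ (Finset.mem_image_of_mem _ hc) ((H2 r hr M c hc).2 hcM), rfl⟩
        (fun b hb' => (H1 r hr N b hb').1 (hb _ (Finset.mem_image_of_mem _ hb')))
      exact ⟨_, Finset.mem_image_of_mem _ ha, (H0 r hr N a ha).2 haN⟩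
    · exact ⟨f (j+1), Finset.mem_singleton_self _,
        key j (j+1) (by omega) hj (hb _ (Finset.mem_singleton_self _))⟩
    · exact ⟨f 0, Finset.mem_singleton_self _,
        key (ℓ-1) 0 (by omega) (by omega) (hb _ (Finset.mem_singleton_self _))⟩

theorem up_down {A : Type} [DecidableEq A] {P : Set (Rule A)}
    {x : A} {ℓ : ℕ} (hℓ : 3 ≤ ℓ) {f : ℕ → A}
    {idx : Rule A → Fin 3 → ℕ} {K N : Set A} (hxN : x ∉ N)
    (h : isModel (reduct (copyProg P x ℓ f idx) K) N) :
    upSet x ℓ f (downSet x ℓ f N) = N := by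
  have hs : ∀ j, j + 1 < ℓ → f j ∈ N → f (j+1) ∈ N := by
    intro j hj hN
    obtain ⟨a, ha, haN⟩ := h ⟨{f (j+1)}, {f j}, ∅⟩
      ⟨_, Or.inl (Or.inr ⟨j, hj, rfl⟩), by simp, rfl⟩ (by simpa using hN)
    rw [Finset.mem_singleton.1 ha] at haN
    exact haN
  have hl : f (ℓ-1) ∈ N → f 0 ∈ N := by
    intro hN
    obtain ⟨a, ha, haN⟩ := h ⟨{f 0}, {f (ℓ-1)}, ∅⟩
      ⟨_, Or.inr rfl, by simp, rfl⟩ (by simpa using hN)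
    rw [Finset.mem_singleton.1 ha] at haN
    exact haN
  have hup : ∀ j k, j + k < ℓ → f j ∈ N → f (j+k) ∈ N := by
    intro j k
    induction k with
    | zero => intro _ h; exact h
    | succ k ih => intro h1 h2; exact hs (j+k) h1 (ih (by omega) h2)
  have h0 : ∀ j, j < ℓ → (f j ∈ N ↔ f 0 ∈ N) := by
    intro j hj
    constructor
    · intro h1
      apply hl
      have := hup j (ℓ-1-j) (by omega) h1
      rwa [show j + (ℓ-1-j) = ℓ-1 by omega] at this
    · intro h1
      have := hup 0 j (by omega) h1
      rwa [Nat.zero_add] at this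
  ext a
  simp only [upSet, downSet, Set.mem_ofPred_eq]
  constructor
  · rintro (⟨h1, h2, (⟨_, _, h3⟩ | ⟨h3, _⟩)⟩ | ⟨⟨j, hj, rfl⟩, (⟨h3, _⟩ | ⟨_, h3⟩)⟩)
    · exact h3
    · exact absurd h3 h1
    · exact absurd rfl h3
    · exact (h0 j hj).2 h3
  · intro ha
    by_cases hF : ∃ j, j < ℓ ∧ f j = a
    · refine Or.inr ⟨hF, Or.inr ⟨by trivial, ?_⟩⟩
      obtain ⟨j, hj, rfl⟩ := hF
      exact (h0 j hj).1 ha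
    · push Not at hF
      have hax : a ≠ x := fun e => hxN (e ▸ ha)
      exact Or.inl ⟨hax, hF, Or.inl ⟨hax, hF, ha⟩⟩

theorem down_up {A : Type} {x : A} {ℓ : ℕ} (hℓ : 3 ≤ ℓ) {f : ℕ → A}
    (hx : ∀ j, j < ℓ → f j ≠ x) {M : Set A} (hM : ∀ j, j < ℓ → f j ∉ M) :
    downSet x ℓ f (upSet x ℓ f M) = M := by
  ext a
  simp only [upSet, downSet, Set.mem_ofPred_eq]
  constructor
  · rintro (⟨h1, h2, (⟨_, _, h3⟩ | ⟨⟨j, hj, e⟩, _⟩)⟩ | ⟨rfl, (⟨_, h, _⟩ | ⟨_, h⟩)⟩)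
    · exact h3
    · exact absurd e (h2 j hj)
    · exact absurd rfl (h 0 (by omega))
    · exact h
  · intro ha
    by_cases hax : a = x
    · subst hax
      exact Or.inr ⟨rfl, Or.inr ⟨⟨0, by omega, rfl⟩, ha⟩⟩
    · have : ∀ j, j < ℓ → f j ≠ a := fun j hj e => hM j hj (e ▸ ha)
      exact Or.inl ⟨hax, this, Or.inl ⟨hax, this, ha⟩⟩

theorem up_mono {A : Type} {x : A} {ℓ : ℕ} {f : ℕ → A} {M N : Set A} (h : M ⊆ N) :
    upSet x ℓ f M ⊆ upSet x ℓ f N := by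
  rintro a (⟨h1, h2, h3⟩ | ⟨h1, h2⟩)
  · exact Or.inl ⟨h1, h2, h h3⟩
  · exact Or.inr ⟨h1, h h2⟩

theorem down_mono {A : Type} {x : A} {ℓ : ℕ} {f : ℕ → A} {M N : Set A} (h : M ⊆ N) :
    downSet x ℓ f M ⊆ downSet x ℓ f N := by
  rintro a (⟨h1, h2, h3⟩ | ⟨h1, h2⟩)
  · exact Or.inl ⟨h1, h2, h h3⟩
  · exact Or.inr ⟨h1, h h2⟩

theorem mem_substAtom_of_ne {A : Type} [DecidableEq A] {x y a : A} {s : Finset A}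
    (h : a ≠ x) (ha : a ∈ s) : a ∈ substAtom x y s :=
  Finset.mem_image.2 ⟨a, ha, if_neg h⟩

theorem of_mem_substAtom {A : Type} [DecidableEq A] {x y a : A} {s : Finset A}
    (ha : a ∈ substAtom x y s) : (a = y ∧ x ∈ s) ∨ (a ≠ x ∧ a ∈ s) := by
  obtain ⟨b, hb, rfl⟩ := Finset.mem_image.1 ha
  by_cases h : b = x
  · subst h; exact Or.inl ⟨if_pos rfl, hb⟩
  · rw [if_neg h]; exact Or.inr ⟨h, hb⟩

/-- Atom-copying transformation: if the atom `x` has exactly `ℓ ≥ 3` occurrences in the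
program `P` (enumerated by `idx`, a bijection from the occurrences of `x` onto `{0,…,ℓ-1}`),
and `f 0, …, f (ℓ-1)` are pairwise distinct fresh atoms not occurring in `P`, then `P`
has an answer set iff the program `P'` obtained by replacing the `j`-th occurrence of `x`
by `f j` and adding the cycle rules `(f (j+1) ← f j)` for `j+1 < ℓ` and `(f 0 ← f (ℓ-1))`
has an answer set. -/
theorem statement12 {A : Type} [DecidableEq A] (P : Set (Rule A)) (hfin : P.Finite)
    (x : A) (ℓ : ℕ) (hℓ : 3 ≤ ℓ)
    (f : ℕ → A)
    (hf_inj : ∀ j j', j < ℓ → j' < ℓ → f j = f j' → j = j')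
    (hf_fresh : ∀ j, j < ℓ → f j ∉ progAtoms P)
    (idx : Rule A → Fin 3 → ℕ)
    (hidx_lt : ∀ r ∈ P, ∀ t : Fin 3, x ∈ occPart r t → idx r t < ℓ)
    (hidx_bij : ∀ j, j < ℓ → ∃! p : Rule A × Fin 3,
        (p.1 ∈ P ∧ x ∈ occPart p.1 p.2) ∧ idx p.1 p.2 = j) :
    ((∃ M : Set A, isAnswerSet P M) ↔
      (∃ M : Set A, isAnswerSet
        ({r' : Rule A | ∃ r ∈ P, r' = ⟨substAtom x (f (idx r 0)) r.head,
            substAtom x (f (idx r 1)) r.pos,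
            substAtom x (f (idx r 2)) r.neg⟩}
          ∪ {r' : Rule A | ∃ j : ℕ, j + 1 < ℓ ∧ r' = ⟨{f (j + 1)}, {f j}, ∅⟩}
          ∪ {(⟨{f 0}, {f (ℓ - 1)}, ∅⟩ : Rule A)}) M)) := by
  have hxP : x ∈ progAtoms P := by
    obtain ⟨⟨r, t⟩, ⟨⟨hr, ht⟩, _⟩, _⟩ := hidx_bij 0 (by omega)
    refine ⟨r, hr, ?_⟩
    fin_cases t
    · exact Or.inl ht
    · exact Or.inr (Or.inl ht)
    · exact Or.inr (Or.inr ht)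
  have hx : ∀ j, j < ℓ → f j ≠ x := fun j hj e => hf_fresh j hj (e ▸ hxP)
  change _ ↔ ∃ M : Set A, isAnswerSet (copyProg P x ℓ f idx) M
  have atoms : ∀ a ∈ progAtoms (copyProg P x ℓ f idx),
      (∃ j, j < ℓ ∧ f j = a) ∨ (a ≠ x ∧ a ∈ progAtoms P) := by
    rintro a ⟨_, ((⟨r, hr, rfl⟩ | ⟨j, hj, rfl⟩) | rfl), h⟩
    · rcases h with h | h | h
      · rcases of_mem_substAtom h with ⟨rfl, h5⟩ | ⟨h1, h⟩
        · exact Or.inl ⟨_, hidx_lt r hr 0 h5, rfl⟩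
        · exact Or.inr ⟨h1, r, hr, Or.inl h⟩
      · rcases of_mem_substAtom h with ⟨rfl, h5⟩ | ⟨h1, h⟩
        · exact Or.inl ⟨_, hidx_lt r hr 1 h5, rfl⟩
        · exact Or.inr ⟨h1, r, hr, Or.inr (Or.inl h)⟩
      · rcases of_mem_substAtom h with ⟨rfl, h5⟩ | ⟨h1, h⟩
        · exact Or.inl ⟨_, hidx_lt r hr 2 h5, rfl⟩
        · exact Or.inr ⟨h1, r, hr, Or.inr (Or.inr h)⟩
    · simp only [Finset.mem_singleton, Finset.notMem_empty, or_false] at h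
      rcases h with rfl | rfl
      · exact Or.inl ⟨_, hj, rfl⟩
      · exact Or.inl ⟨j, by omega, rfl⟩
    · simp only [Finset.mem_singleton, Finset.notMem_empty, or_false] at h
      rcases h with rfl | rfl
      · exact Or.inl ⟨0, by omega, rfl⟩
      · exact Or.inl ⟨ℓ-1, by omega, rfl⟩
  have hxP' : x ∉ progAtoms (copyProg P x ℓ f idx) := by
    intro h
    rcases atoms x h with ⟨j, hj, e⟩ | ⟨h, _⟩
    · exact hx j hj e
    · exact h rfl
  constructor
  · rintro ⟨M, hMs, hM, hmin⟩
    have hMF : ∀ j, j < ℓ → f j ∉ M := fun j hj h => hf_fresh j hj (hMs h)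
    refine ⟨upSet x ℓ f M, ?_, (up_model_iff hℓ hx hf_fresh hidx_lt M M).2 hM, ?_⟩
    · rintro a (⟨h1, _, h3⟩ | ⟨⟨j, hj, rfl⟩, _⟩)
      · obtain ⟨r, hr, h⟩ := hMs h3
        exact ⟨_, Or.inl (Or.inl ⟨r, hr, rfl⟩),
          h.imp (mem_substAtom_of_ne h1)
            (Or.imp (mem_substAtom_of_ne h1) (mem_substAtom_of_ne h1))⟩
      · by_cases hj' : j + 1 < ℓ
        · exact ⟨_, Or.inl (Or.inr ⟨j, hj', rfl⟩), Or.inr (Or.inl (Finset.mem_singleton_self _))⟩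
        · obtain rfl : j = ℓ - 1 := by omega
          exact ⟨_, Or.inr rfl, Or.inr (Or.inl (Finset.mem_singleton_self _))⟩
    · intro N hN hNm
      have hxN : x ∉ N := by
        intro h
        rcases hN.1 h with ⟨h, _⟩ | ⟨⟨j, hj, e⟩, _⟩
        · exact h rfl
        · exact hx j hj e
      have e := up_down hℓ hxN hNm
      have hsub := down_mono (x := x) (ℓ := ℓ) (f := f) hN.1
      rw [down_up hℓ hx hMF] at hsub
      refine hmin (downSet x ℓ f N) (hsub.ssubset_of_ne ?_) ?_
      · intro e2
        rw [e2] at e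
        exact hN.ne e.symm
      · rw [← e] at hNm
        exact (up_model_iff hℓ hx hf_fresh hidx_lt M _).1 hNm
  · rintro ⟨M', hMs, hM, hmin⟩
    have e := up_down hℓ (fun h => hxP' (hMs h)) hM
    have hDs : downSet x ℓ f M' ⊆ progAtoms P := by
      rintro a (⟨_, h2, h3⟩ | ⟨rfl, _⟩)
      · rcases atoms a (hMs h3) with ⟨j, hj, e⟩ | ⟨_, h⟩
        · exact absurd e (h2 j hj)
        · exact h
      · exact hxP
    generalize downSet x ℓ f M' = M at e hDs
    subst e
    have hMF : ∀ j, j < ℓ → f j ∉ M := fun j hj h => hf_fresh j hj (hDs h)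
    refine ⟨M, hDs, (up_model_iff hℓ hx hf_fresh hidx_lt M M).1 hM, ?_⟩
    intro N hN hNm
    refine hmin (upSet x ℓ f N) ((up_mono hN.1).ssubset_of_ne ?_)
      ((up_model_iff hℓ hx hf_fresh hidx_lt M N).2 hNm)
    intro e
    apply hN.ne
    rw [← down_up hℓ hx hMF, ← e, down_up hℓ hx (fun j hj h => hMF j hj (hN.1 h))]
end
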